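/- Let D = ([n], J) be a nondegenerate discrete polymatroid, let ω : [n] → ℝ_{>0} be a positive weight function, and let k be an integer with 1 ≤ k < rk(D). Then J_ω(k)² = (1 + 1/k)·J_ω(k−1)·J_ω(k+1) if and only if polygirth(D) > k+1. -/

import Mathlib

open scoped Classical BigOperators

noncomputable section

variable {n : ℕ}

/-- The rank of a discrete polymatroid: the maximal size `|a| = a_1 + … + a_n` of an
independent multiset. -/
def polyRk (J : Finset (Fin n → ℕ)) : ℕ := J.sup (fun a => ∑ i, a i)

/-- The independent multisets of size `k`. -/
def polySize (J : Finset (Fin n → ℕ)) (k : ℕ) : Finset (Fin n → ℕ) :=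
  J.filter (fun a => (∑ i, a i) = k)

/-- The set of continuations of `a`. -/
def pCont (J : Finset (Fin n → ℕ)) (a : Fin n → ℕ) : Finset (Fin n) :=
  Finset.univ.filter (fun i => a + Pi.single i 1 ∈ J)

/-- The parallel class of `i ∈ Cnt(a)`:  the set of continuations `j` with `j ∼_a i`, i.e.
`j = i` or `a + e_i + e_j ∉ J`. -/
def pParClass (J : Finset (Fin n → ℕ)) (a : Fin n → ℕ) (i : Fin n) : Finset (Fin n) :=
  (pCont J a).filter (fun j => j = i ∨ a + Pi.single i 1 + Pi.single j 1 ∉ J)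

/-- The set `Par(a)` of parallel classes of `a`. -/
def pParClasses (J : Finset (Fin n → ℕ)) (a : Fin n → ℕ) : Finset (Finset (Fin n)) :=
  (pCont J a).image (pParClass J a)

/-- The `k`-continuation number `p(k)` of a discrete polymatroid. -/
def pContNum (J : Finset (Fin n → ℕ)) (k : ℕ) : ℕ :=
  (polySize J k).sup (fun a => (pParClasses J a).card)

/-- The weighted count `J_{ω,t}(k) = Σ_{a ∈ J_k} t^{π(a)}·ω(a)/a!`, where
`π(a) = Σ_i a_i (a_i - 1)/2`, `ω(a) = Π_i ω(i)^{a_i}` and `a! = Π_i a_i!`. -/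
def Jwt (J : Finset (Fin n → ℕ)) (ω : Fin n → ℝ) (t : ℝ) (k : ℕ) : ℝ :=
  ∑ a ∈ polySize J k,
    t ^ (∑ i, Nat.choose (a i) 2) * (∏ i, ω i ^ a i) / (∏ i, ((a i).factorial : ℝ))

/-- The weighted count `J_ω(k) = Σ_{a ∈ J_k} ω(a)/a!`. -/
def Jw (J : Finset (Fin n → ℕ)) (ω : Fin n → ℝ) (k : ℕ) : ℝ :=
  ∑ a ∈ polySize J k, (∏ i, ω i ^ a i) / (∏ i, ((a i).factorial : ℝ))

theorem diag_aux {ι : Type*} [Fintype ι] [DecidableEq ι] (B : ι → ι → ℝ) (hB : ∀ i j, B i j = B j i) :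
    ∃ (lam : ι → ℝ) (u : ι → ι → ℝ), (∀ i k, ∑ j, B k j * u i j = lam i * u i k) ∧
      (∀ i, ∑ j, u i j ^ 2 = 1) ∧
      ∀ y : ι → ℝ, ∑ i, ∑ j, y i * y j * B i j = ∑ i, lam i * (∑ j, u i j * y j) ^ 2 := by
  have hH : (Matrix.of B).IsHermitian := by
    ext i j; simp [Matrix.conjTranspose_apply, hB i j]
  have hev : ∀ i k, ∑ j, B k j * hH.eigenvectorBasis i j
      = hH.eigenvalues i * hH.eigenvectorBasis i k := by
    intro i k
    have := congrFun (hH.mulVec_eigenvectorBasis i) k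
    simpa [Matrix.mulVec, dotProduct] using this
  refine ⟨hH.eigenvalues, fun i j => hH.eigenvectorBasis i j, hev, ?_, ?_⟩
  · intro i
    have h1 := hH.eigenvectorBasis.orthonormal.1 i
    have h2 := EuclideanSpace.norm_sq_eq (hH.eigenvectorBasis i)
    rw [h1] at h2
    simpa using h2.symm
  · intro y
    have h1 := hH.eigenvectorBasis.sum_inner_mul_inner (WithLp.toLp 2 y)
      (WithLp.toLp 2 (fun i => ∑ j, B i j * y j))
    have h2 : ∀ i, inner ℝ (hH.eigenvectorBasis i) (WithLp.toLp 2 (fun i => ∑ j, B i j * y j))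
        = hH.eigenvalues i * (∑ j, hH.eigenvectorBasis i j * y j) := by
      intro i
      simp only [PiLp.inner_apply, RCLike.inner_apply, conj_trivial]
      calc ∑ k, (∑ j, B k j * y j) * hH.eigenvectorBasis i k
          = ∑ j, (∑ k, B j k * hH.eigenvectorBasis i k) * y j := by
            simp only [Finset.sum_mul]
            rw [Finset.sum_comm]
            refine Finset.sum_congr rfl fun a _ => Finset.sum_congr rfl fun b _ => ?_
            rw [hB b a]; ring
        _ = _ := by
            simp only [hev, Finset.mul_sum]
            refine Finset.sum_congr rfl fun a _ => by ring
    have h3 : ∀ i, inner ℝ (WithLp.toLp 2 y) (hH.eigenvectorBasis i)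
        = (∑ j, hH.eigenvectorBasis i j * y j) := by
      intro i
      simp only [PiLp.inner_apply, RCLike.inner_apply, conj_trivial]
    have h4 : inner ℝ (WithLp.toLp 2 y) (WithLp.toLp 2 (fun i => ∑ j, B i j * y j))
        = ∑ i, ∑ j, y i * y j * B i j := by
      simp only [PiLp.inner_apply, RCLike.inner_apply, conj_trivial, Finset.sum_mul]
      refine Finset.sum_congr rfl fun a _ => Finset.sum_congr rfl fun b _ => by ring
    rw [← h4, ← h1]
    refine Finset.sum_congr rfl fun i _ => ?_
    rw [h2, h3]; ring

theorem step_aux {ι : Type*} [Fintype ι] [DecidableEq ι] (M : ι → ι → ℝ)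
    (hM : ∀ i j, M i j = M j i) (hM0 : ∀ i j, 0 ≤ M i j) (p : ι → ℝ) (hp : ∀ i, 0 < p i)
    (w : ι → ℝ) (hw : ∀ i, w i = ∑ j, M i j * p j) (o : ι) (ho : ∀ i, w i ≠ 0 → 0 < M i o)
    (hstar : ∀ x : ι → ℝ, ∑ i, ∑ j, x i * x j * M i j ≤ ∑ l, p l / w l * (∑ j, M l j * x j) ^ 2)
    (x : ι → ℝ) (hx : ∑ i, x i * w i = 0) : ∑ i, ∑ j, x i * x j * M i j ≤ 0 := by
  have hw0 : ∀ i, 0 ≤ w i := fun i => by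
    rw [hw]; exact Finset.sum_nonneg fun j _ => mul_nonneg (hM0 i j) (hp j).le
  have hloop : ∀ i, w i = 0 → ∀ j, M i j = 0 := by
    intro i hi j
    rw [hw] at hi
    have := (Finset.sum_eq_zero_iff_of_nonneg
      (fun j _ => mul_nonneg (hM0 i j) (hp j).le)).1 hi j (Finset.mem_univ j)
    exact (mul_eq_zero.1 this).resolve_right (hp j).ne'
  set s : ι → ℝ := fun i => Real.sqrt (p i / w i) with hs
  have hs2 : ∀ i, s i ^ 2 = p i / w i := fun i =>
    Real.sq_sqrt (div_nonneg (hp i).le (hw0 i))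
  have hspos : ∀ i, w i ≠ 0 → 0 < s i := fun i hi =>
    Real.sqrt_pos.2 (div_pos (hp i) (lt_of_le_of_ne (hw0 i) (Ne.symm hi)))
  obtain ⟨lam, u, hev, hu1, hq⟩ := diag_aux (fun i j => s i * s j * M i j)
    (fun i j => by simp only [hM i j]; ring)
  have e1 : ∑ i, ∑ j, x i * x j * M i j =
      ∑ i, ∑ j, (x i / s i) * (x j / s j) * (s i * s j * M i j) := by
    refine Finset.sum_congr rfl fun i _ => Finset.sum_congr rfl fun j _ => ?_
    by_cases hi : w i = 0
    · simp [hloop i hi]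
    by_cases hj : w j = 0
    · simp [hM i j, hloop j hj]
    have := hspos i hi
    have := hspos j hj
    field_simp
  rw [e1, hq]
  refine Finset.sum_nonpos fun a _ => ?_
  -- analyze eigenpair
  have hsM : ∀ l, s l * ∑ j, M l j * (s j * u a j) = lam a * u a l := by
    intro l
    rw [← hev, Finset.mul_sum]
    exact Finset.sum_congr rfl fun j _ => by ring
  have hquad : ∑ i, ∑ j, (s i * u a i) * (s j * u a j) * M i j = lam a := by
    calc _ = ∑ i, u a i * (s i * ∑ j, M i j * (s j * u a j)) := by
          simp only [Finset.mul_sum]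
          refine Finset.sum_congr rfl fun i _ => Finset.sum_congr rfl fun j _ => by ring
      _ = lam a * ∑ i, u a i ^ 2 := by
          simp only [hsM, Finset.mul_sum]
          refine Finset.sum_congr rfl fun i _ => by ring
      _ = lam a := by rw [hu1, mul_one]
  have hle : lam a ≤ lam a ^ 2 := by
    have := hstar (fun i => s i * u a i)
    rw [hquad] at this
    refine this.trans (le_of_eq ?_)
    calc _ = ∑ l, (s l * ∑ j, M l j * (s j * u a j)) ^ 2 := by
          refine Finset.sum_congr rfl fun l _ => by rw [mul_pow, hs2]
      _ = lam a ^ 2 * ∑ l, u a l ^ 2 := by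
          simp only [hsM, Finset.mul_sum]
          refine Finset.sum_congr rfl fun i _ => by ring
      _ = _ := by rw [hu1, mul_one]
  by_cases hl : lam a ≤ 0
  · exact mul_nonpos_of_nonpos_of_nonneg hl (sq_nonneg _)
  push Not at hl
  have hl1 : 1 ≤ lam a := by nlinarith
  set t : ι → ℝ := fun i => s i * u a i / p i with ht
  have hz : ∀ i, s i * u a i = p i * t i := fun i => by
    simp only [ht]; have := hp i; field_simp
  have hE : ∑ i, ∑ j, M i j * p i * p j * (t i - t j) ^ 2 =
      2 * ∑ i, w i * p i * t i ^ 2 - 2 * lam a := by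
    have hA : ∑ i, ∑ j, M i j * p i * p j * t i ^ 2 = ∑ i, w i * p i * t i ^ 2 := by
      refine Finset.sum_congr rfl fun i _ => ?_
      rw [hw, Finset.sum_mul, Finset.sum_mul]
      exact Finset.sum_congr rfl fun j _ => by ring
    have hA' : ∑ i, ∑ j, M i j * p i * p j * t j ^ 2 = ∑ i, w i * p i * t i ^ 2 := by
      rw [← hA, Finset.sum_comm]
      refine Finset.sum_congr rfl fun i _ => Finset.sum_congr rfl fun j _ => ?_
      rw [hM j i]; ring
    rw [← hquad]
    calc _ = ∑ i, ∑ j, M i j * p i * p j * t i ^ 2 + ∑ i, ∑ j, M i j * p i * p j * t j ^ 2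
          - 2 * ∑ i, ∑ j, (s i * u a i) * (s j * u a j) * M i j := by
          simp only [Finset.mul_sum, ← Finset.sum_add_distrib, ← Finset.sum_sub_distrib]
          refine Finset.sum_congr rfl fun i _ => Finset.sum_congr rfl fun j _ => ?_
          rw [hz, hz]; ring
      _ = _ := by rw [hA, hA']; ring
  have hle1 : ∑ i, w i * p i * t i ^ 2 ≤ 1 := by
    rw [← hu1 a]
    refine Finset.sum_le_sum fun i _ => ?_
    by_cases hi : w i = 0
    · rw [hi]; simp [sq_nonneg]
    · have := hp i
      have h2 := hs2 i
      have : w i * p i * t i ^ 2 = s i ^ 2 * (w i / p i) * u a i ^ 2 := by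
        simp only [ht]; field_simp
      rw [this, h2]
      apply le_of_eq
      field_simp
  have hEnn : ∀ i ∈ Finset.univ, 0 ≤ ∑ j, M i j * p i * p j * (t i - t j) ^ 2 := fun i _ =>
    Finset.sum_nonneg fun j _ => mul_nonneg (mul_nonneg (mul_nonneg (hM0 i j) (hp i).le) (hp j).le)
      (sq_nonneg _)
  have hE0 : ∑ i, ∑ j, M i j * p i * p j * (t i - t j) ^ 2 = 0 :=
    le_antisymm (by rw [hE]; linarith) (Finset.sum_nonneg hEnn)
  have hteq : ∀ i, w i ≠ 0 → t i = t o := by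
    intro i hi
    have h1 := (Finset.sum_eq_zero_iff_of_nonneg hEnn).1 hE0 i (Finset.mem_univ i)
    have h2 := (Finset.sum_eq_zero_iff_of_nonneg (fun j _ => mul_nonneg (mul_nonneg
      (mul_nonneg (hM0 i j) (hp i).le) (hp j).le) (sq_nonneg _))).1 h1 o (Finset.mem_univ o)
    have h3 : 0 < M i o * p i * p o := mul_pos (mul_pos (ho i hi) (hp i)) (hp o)
    have h4 := (mul_eq_zero.1 h2).resolve_left h3.ne'
    have := pow_eq_zero_iff (two_ne_zero) |>.1 h4
    linarith
  have hzero : ∑ j, u a j * (x j / s j) = 0 := by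
    have : ∑ j, u a j * (x j / s j) = t o * ∑ j, x j * w j := by
      rw [Finset.mul_sum]
      refine Finset.sum_congr rfl fun j _ => ?_
      by_cases hj : w j = 0
      · simp [hs, hj]
      · rw [← hteq j hj]
        have h1 := hspos j hj
        have h2 := hs2 j
        have h3 := hp j
        have h4 : s j ^ 2 * w j = p j := by rw [h2]; field_simp
        simp only [ht]
        field_simp
        rw [← h4]; ring
    rw [this, hx, mul_zero]
  rw [hzero]; simp

theorem hyper_of_perp {ι : Type*} [Fintype ι] (M : ι → ι → ℝ)
    (p : ι → ℝ)
    (w : ι → ℝ) (hw : ∀ i, w i = ∑ j, M i j * p j) (hM : ∀ i j, M i j = M j i)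
    (a : ℝ) (ha : a = ∑ i, p i * w i) (ha0 : 0 ≤ a)
    (h : ∀ x : ι → ℝ, ∑ i, x i * w i = 0 → ∑ i, ∑ j, x i * x j * M i j ≤ 0) (x : ι → ℝ) :
    (∑ i, ∑ j, x i * x j * M i j) * a ≤ (∑ i, x i * w i) ^ 2 := by
  rcases ha0.eq_or_lt with h0 | hpos
  · rw [← h0, mul_zero]; exact sq_nonneg _
  set b := ∑ i, x i * w i with hb
  have h1 := h (fun i => a * x i - b * p i) (by
    simp only [sub_mul, Finset.sum_sub_distrib, mul_assoc, ← Finset.mul_sum]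
    rw [← ha, ← hb]; ring)
  have e2 : ∑ i, ∑ j, x i * p j * M i j = b := by
    rw [hb]; refine Finset.sum_congr rfl fun i _ => ?_
    rw [hw, Finset.mul_sum]; exact Finset.sum_congr rfl fun j _ => by ring
  have e3 : ∑ i, ∑ j, p i * x j * M i j = b := by
    rw [← e2, Finset.sum_comm]
    refine Finset.sum_congr rfl fun i _ => Finset.sum_congr rfl fun j _ => ?_
    rw [hM j i]; ring
  have e4 : ∑ i, ∑ j, p i * p j * M i j = a := by
    rw [ha]; refine Finset.sum_congr rfl fun i _ => ?_
    rw [hw, Finset.mul_sum]; exact Finset.sum_congr rfl fun j _ => by ring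
  have e5 : ∑ i, ∑ j, (a * x i - b * p i) * (a * x j - b * p j) * M i j
      = a ^ 2 * (∑ i, ∑ j, x i * x j * M i j) - a * b * (∑ i, ∑ j, x i * p j * M i j)
        - a * b * (∑ i, ∑ j, p i * x j * M i j) + b ^ 2 * ∑ i, ∑ j, p i * p j * M i j := by
    simp only [Finset.mul_sum, ← Finset.sum_add_distrib, ← Finset.sum_sub_distrib]
    refine Finset.sum_congr rfl fun i _ => Finset.sum_congr rfl fun j _ => by ring
  rw [e5, e2, e3, e4] at h1
  have : a * ((∑ i, ∑ j, x i * x j * M i j) * a - b ^ 2) ≤ 0 := by nlinarith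
  by_contra hc
  push Not at hc
  have := mul_pos hpos (sub_pos.2 hc)
  linarith

theorem base_aux {ι κ : Type*} [Fintype ι] [Fintype κ] (M : ι → ι → ℝ) (σ : ι → ℝ)
    (φ : κ → ι → ℝ) (hMf : ∀ i j, M i j = σ i * σ j - ∑ C, φ C i * φ C j)
    (hM0 : ∀ i j, 0 ≤ M i j) (p : ι → ℝ) (hp : ∀ i, 0 ≤ p i) (hP : ∑ i, σ i * p i ≠ 0)
    (x : ι → ℝ) (hx : ∑ i, x i * ∑ j, M i j * p j = 0) : ∑ i, ∑ j, x i * x j * M i j ≤ 0 := by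
  have key : ∀ y z : ι → ℝ, ∑ i, ∑ j, y i * z j * M i j =
      (∑ i, σ i * y i) * (∑ i, σ i * z i) - ∑ C, (∑ i, φ C i * y i) * (∑ i, φ C i * z i) := by
    intro y z
    have e1 : ∑ C, (∑ i, φ C i * y i) * (∑ i, φ C i * z i) =
        ∑ i, ∑ j, ∑ C, φ C i * y i * (φ C j * z j) := by
      simp only [Finset.sum_mul_sum]
      rw [Finset.sum_comm]
      exact Finset.sum_congr rfl fun i _ => Finset.sum_comm
    rw [e1, Finset.sum_mul_sum]
    simp only [← Finset.sum_sub_distrib]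
    refine Finset.sum_congr rfl fun i _ => Finset.sum_congr rfl fun j _ => ?_
    rw [hMf, mul_sub, Finset.mul_sum]
    congr 1
    · ring
    · exact Finset.sum_congr rfl fun C _ => by ring
  have hxp : ∑ i, ∑ j, x i * p j * M i j = 0 := by
    rw [← hx]
    refine Finset.sum_congr rfl fun i _ => ?_
    rw [Finset.mul_sum]; exact Finset.sum_congr rfl fun j _ => by ring
  have hpp : 0 ≤ ∑ i, ∑ j, p i * p j * M i j :=
    Finset.sum_nonneg fun i _ => Finset.sum_nonneg fun j _ =>
      mul_nonneg (mul_nonneg (hp i) (hp j)) (hM0 i j)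
  rw [key] at hxp hpp ⊢
  have hcs := Finset.sum_mul_sq_le_sq_mul_sq Finset.univ
    (fun C => ∑ i, φ C i * x i) (fun C => ∑ i, φ C i * p i)
  simp only [← pow_two] at hpp ⊢
  set X := ∑ i, σ i * x i
  set P := ∑ i, σ i * p i
  set XX := ∑ C, (∑ i, φ C i * x i) ^ 2
  set PP := ∑ C, (∑ i, φ C i * p i) ^ 2
  have hXX : 0 ≤ XX := Finset.sum_nonneg fun C _ => sq_nonneg _
  rw [← sub_eq_zero.1 hxp] at hcs
  have hPpos : 0 < P ^ 2 := by positivity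
  have : X ^ 2 * P ^ 2 ≤ XX * P ^ 2 := by nlinarith
  have := le_of_mul_le_mul_right this hPpos
  linarith

def inc : Option (Fin n) → (Fin n → ℕ) → (Fin n → ℕ)
  | none, s => s
  | some i, s => s + Pi.single i 1

theorem inc_comm (i j : Option (Fin n)) (s : Fin n → ℕ) : inc i (inc j s) = inc j (inc i s) := by
  cases i <;> cases j <;> simp [inc, add_right_comm]

theorem le_inc (i : Option (Fin n)) (s : Fin n → ℕ) : s ≤ inc i s := by
  cases i <;> simp [inc]

/-- Weighted number of words extending `s`. -/
def WW (J : Finset (Fin n → ℕ)) (p : Option (Fin n) → ℝ) : ℕ → (Fin n → ℕ) → ℝ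
  | 0, s => if s ∈ J then 1 else 0
  | m + 1, s => ∑ l, p l * WW J p m (inc l s)

theorem WW_succ (J : Finset (Fin n → ℕ)) (p : Option (Fin n) → ℝ) (m : ℕ) (s : Fin n → ℕ) :
    WW J p (m + 1) s = ∑ l, p l * WW J p m (inc l s) := rfl

theorem WW_nonneg (J : Finset (Fin n → ℕ)) (p : Option (Fin n) → ℝ) (hp : ∀ i, 0 ≤ p i) (m : ℕ)
    (s : Fin n → ℕ) : 0 ≤ WW J p m s := by
  induction m generalizing s with
  | zero => simp only [WW]; split_ifs <;> norm_num
  | succ m ih => rw [WW_succ]; exact Finset.sum_nonneg fun l _ => mul_nonneg (hp l) (ih _)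

theorem WW_zero_of_notMem (J : Finset (Fin n → ℕ))
    (h_hered : ∀ a ∈ J, ∀ b : Fin n → ℕ, b ≤ a → b ∈ J) (p : Option (Fin n) → ℝ) (m : ℕ)
    (s : Fin n → ℕ) (hs : s ∉ J) : WW J p m s = 0 := by
  induction m generalizing s with
  | zero => simp [WW, hs]
  | succ m ih =>
    rw [WW_succ]
    refine Finset.sum_eq_zero fun l _ => ?_
    rw [ih _ fun h => hs (h_hered _ h _ (le_inc l s)), mul_zero]

theorem WW_pos (J : Finset (Fin n → ℕ)) (p : Option (Fin n) → ℝ) (hp : ∀ i, 0 < p i) (m : ℕ)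
    (s : Fin n → ℕ) (hs : s ∈ J) : 0 < WW J p m s := by
  induction m with
  | zero => simp [WW, hs]
  | succ m ih =>
    rw [WW_succ]
    exact Finset.sum_pos' (fun l _ => mul_nonneg (hp l).le (WW_nonneg J p (fun i => (hp i).le) _ _))
      ⟨none, Finset.mem_univ _, mul_pos (hp none) ih⟩

theorem WW_row (J : Finset (Fin n → ℕ)) (p : Option (Fin n) → ℝ) (m : ℕ) (s : Fin n → ℕ)
    (i : Option (Fin n)) :
    WW J p (m + 1) (inc i s) = ∑ j, WW J p m (inc i (inc j s)) * p j := by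
  rw [WW_succ]
  exact Finset.sum_congr rfl fun j _ => by rw [inc_comm, mul_comm]

/-- The hyperbolicity property. -/
def Hyp (J : Finset (Fin n → ℕ)) (p : Option (Fin n) → ℝ) (m : ℕ) (s : Fin n → ℕ) : Prop :=
  ∀ x : Option (Fin n) → ℝ, (∑ i, ∑ j, x i * x j * WW J p m (inc i (inc j s))) * WW J p (m + 2) s
    ≤ (∑ i, x i * WW J p (m + 1) (inc i s)) ^ 2

theorem Hyp_of_perp (J : Finset (Fin n → ℕ)) (p : Option (Fin n) → ℝ) (hp : ∀ i, 0 ≤ p i) (m : ℕ)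
    (s : Fin n → ℕ)
    (h : ∀ x : Option (Fin n) → ℝ, ∑ i, x i * WW J p (m + 1) (inc i s) = 0 →
      ∑ i, ∑ j, x i * x j * WW J p m (inc i (inc j s)) ≤ 0) : Hyp J p m s := by
  intro x
  exact hyper_of_perp (fun i j => WW J p m (inc i (inc j s))) p
    (fun i => WW J p (m + 1) (inc i s)) (fun i => WW_row J p m s i)
    (fun i j => by simp only [inc_comm i j]) _ (WW_succ J p (m + 1) s) (WW_nonneg J p hp _ _) h x

/-- parallelism -/
def par (J : Finset (Fin n → ℕ)) (s : Fin n → ℕ) (i j : Option (Fin n)) : Prop :=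
  inc i s ∈ J ∧ inc j s ∈ J ∧ inc i (inc j s) ∉ J

theorem par_symm {J : Finset (Fin n → ℕ)} {s : Fin n → ℕ} {i j : Option (Fin n)}
    (h : par J s i j) : par J s j i := ⟨h.2.1, h.1, by rw [inc_comm]; exact h.2.2⟩

theorem par_trans {J : Finset (Fin n → ℕ)}
    (h_exch : ∀ a ∈ J, ∀ b ∈ J, (∑ i, a i) < (∑ i, b i) →
      ∃ i : Fin n, a i < b i ∧ a + Pi.single i 1 ∈ J)
    {s : Fin n → ℕ} {i j l : Option (Fin n)}
    (h : par J s i j) (h' : par J s j l) : par J s i l := by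
  refine ⟨h.1, h'.2.1, fun hc => ?_⟩
  obtain ⟨hi, hj, hij⟩ := h
  obtain ⟨-, hl, hjl⟩ := h'
  cases i with
  | none => exact hij hj
  | some a =>
  cases l with
  | none => exact hjl hj
  | some c =>
  cases j with
  | none => exact hij hi
  | some b =>
  simp only [inc] at *
  obtain ⟨d, hd, hdJ⟩ := h_exch _ hj _ hc (by simp [Finset.sum_add_distrib])
  have : d = a ∨ d = c := by
    by_contra hne
    push Not at hne
    simp [Pi.single_apply, hne.1, hne.2] at hd
  rcases this with rfl | rfl
  · exact hij hdJ
  · exact hjl (by rwa [add_right_comm])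

theorem Hyp_base (J : Finset (Fin n → ℕ))
    (h_hered : ∀ a ∈ J, ∀ b : Fin n → ℕ, b ≤ a → b ∈ J)
    (h_exch : ∀ a ∈ J, ∀ b ∈ J, (∑ i, a i) < (∑ i, b i) →
      ∃ i : Fin n, a i < b i ∧ a + Pi.single i 1 ∈ J)
    (p : Option (Fin n) → ℝ) (hp : ∀ i, 0 < p i) (s : Fin n → ℕ) : Hyp J p 0 s := by
  by_cases hs : s ∈ J
  swap
  · intro x
    rw [WW_zero_of_notMem J h_hered p _ s hs, mul_zero]
    exact sq_nonneg _
  apply Hyp_of_perp J p (fun i => (hp i).le)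
  intro x hx
  let cls : Option (Fin n) → Finset (Option (Fin n)) := fun i => Finset.univ.filter (par J s i)
  refine base_aux (fun i j => WW J p 0 (inc i (inc j s))) (fun i => if inc i s ∈ J then 1 else 0)
    (fun (C : Finset (Option (Fin n))) i => if par J s i i ∧ cls i = C then 1 else 0)
    ?_ (fun i j => WW_nonneg J p (fun i => (hp i).le) _ _) p (fun i => (hp i).le) ?_ x ?_
  · intro i j
    have e : ∑ C, (if par J s i i ∧ cls i = C then (1 : ℝ) else 0) *
        (if par J s j j ∧ cls j = C then 1 else 0) = if par J s i j then 1 else 0 := by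
      rw [Finset.sum_eq_single (cls i)]
      · by_cases h : par J s i j
        · have h1 : par J s i i := par_trans h_exch h (par_symm h)
          have h2 : par J s j j := par_trans h_exch (par_symm h) h
          have h3 : cls j = cls i := by
            ext l
            simp only [cls, Finset.mem_filter, Finset.mem_univ, true_and]
            exact ⟨par_trans h_exch h, par_trans h_exch (par_symm h)⟩
          simp [h, h1, h2, h3]
        · rw [if_neg h]
          by_cases h2 : par J s j j ∧ cls j = cls i
          · exfalso
            apply h
            have : j ∈ cls j := by simp [cls, h2.1]
            rw [h2.2] at this
            simpa [cls] using this
          · rw [if_neg h2, mul_zero]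
      · intro C _ hC
        rw [if_neg (fun h => hC h.2.symm), zero_mul]
      · simp
    rw [e]
    simp only [WW]
    by_cases hi : inc i s ∈ J
    · by_cases hj : inc j s ∈ J
      · by_cases hij : inc i (inc j s) ∈ J <;> simp [par, hi, hj, hij]
      · have : inc i (inc j s) ∉ J := fun h => hj (h_hered _ h _ (le_inc _ _))
        simp [par, hj, this]
    · have : inc i (inc j s) ∉ J := fun h => hi (h_hered _ h _ (by rw [inc_comm]; exact le_inc _ _))
      simp [par, hi, this]
  · apply ne_of_gt
    refine Finset.sum_pos' (fun i _ => mul_nonneg (by split_ifs <;> norm_num) (hp i).le)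
      ⟨none, Finset.mem_univ _, ?_⟩
    simp [inc, hs, hp none]
  · rw [← hx]
    exact Finset.sum_congr rfl fun i _ => by rw [← WW_row]

theorem quad_expand (J : Finset (Fin n → ℕ)) (p : Option (Fin n) → ℝ) (m : ℕ) (s : Fin n → ℕ)
    (x : Option (Fin n) → ℝ) : ∑ i, ∑ j, x i * x j * WW J p (m + 1) (inc i (inc j s)) =
      ∑ l, p l * ∑ i, ∑ j, x i * x j * WW J p m (inc i (inc j (inc l s))) := by
  simp only [WW_succ, Finset.mul_sum]
  rw [Finset.sum_comm' (t' := Finset.univ) (s' := fun _ => Finset.univ) (by simp)]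
  rw [Finset.sum_comm (s := Finset.univ (α := Option (Fin n))) (t := Finset.univ)
    (f := fun l i => ∑ j, p l * (x i * x j * WW J p m (inc i (inc j (inc l s)))))]
  rw [Finset.sum_comm]
  refine Finset.sum_congr rfl fun i _ => ?_
  rw [Finset.sum_comm]
  refine Finset.sum_congr rfl fun l _ => Finset.sum_congr rfl fun j _ => ?_
  rw [inc_comm l i, inc_comm l j]; ring

theorem Hyp_pos (J : Finset (Fin n → ℕ))
    (h_hered : ∀ a ∈ J, ∀ b : Fin n → ℕ, b ≤ a → b ∈ J)
    (h_exch : ∀ a ∈ J, ∀ b ∈ J, (∑ i, a i) < (∑ i, b i) →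
      ∃ i : Fin n, a i < b i ∧ a + Pi.single i 1 ∈ J)
    (p : Option (Fin n) → ℝ) (hp : ∀ i, 0 < p i) (m : ℕ) (s : Fin n → ℕ) : Hyp J p m s := by
  induction m generalizing s with
  | zero => exact Hyp_base J h_hered h_exch p hp s
  | succ m ih =>
    apply Hyp_of_perp J p (fun i => (hp i).le)
    intro x hx
    refine step_aux (fun i j => WW J p (m + 1) (inc i (inc j s)))
      (fun i j => by simp only [inc_comm i j]) (fun i j => WW_nonneg J p (fun i => (hp i).le) _ _)
      p hp (fun i => WW J p (m + 1 + 1) (inc i s)) (fun i => WW_row J p (m + 1) s i) none ?_ ?_ x hx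
    · intro i hi
      apply WW_pos J p hp
      by_contra hc
      exact hi (WW_zero_of_notMem J h_hered p _ _ hc)
    · intro x
      rw [quad_expand]
      refine Finset.sum_le_sum fun l _ => ?_
      rw [div_mul_eq_mul_div, mul_div_assoc]
      refine mul_le_mul_of_nonneg_left ?_ (hp l).le
      by_cases hl : inc l s ∈ J
      · rw [le_div_iff₀ (WW_pos J p hp _ _ hl)]
        refine (ih (inc l s) x).trans (le_of_eq ?_)
        congr 1
        exact Finset.sum_congr rfl fun j _ => by rw [inc_comm l j, mul_comm]
      · rw [WW_zero_of_notMem J h_hered p (m + 1 + 1) _ hl, div_zero]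
        apply le_of_eq
        refine Finset.sum_eq_zero fun i _ => Finset.sum_eq_zero fun j _ => ?_
        rw [WW_zero_of_notMem J h_hered p m, mul_zero]
        exact fun h => hl (h_hered _ h _ ((le_inc _ _).trans (le_inc _ _)))

theorem WW_cont (J : Finset (Fin n → ℕ)) (p : Option (Fin n) → ℝ) (m : ℕ) (s : Fin n → ℕ) :
    Continuous fun ε : ℝ => WW J (fun i => p i + ε) m s := by
  induction m generalizing s with
  | zero => simp only [WW]; exact continuous_const
  | succ m ih =>
    simp only [WW_succ]
    exact continuous_finsetSum _ fun l _ => (continuous_const.add continuous_id).mul (ih _)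

theorem Hyp_nonneg (J : Finset (Fin n → ℕ))
    (h_hered : ∀ a ∈ J, ∀ b : Fin n → ℕ, b ≤ a → b ∈ J)
    (h_exch : ∀ a ∈ J, ∀ b ∈ J, (∑ i, a i) < (∑ i, b i) →
      ∃ i : Fin n, a i < b i ∧ a + Pi.single i 1 ∈ J)
    (p : Option (Fin n) → ℝ) (hp : ∀ i, 0 ≤ p i) (m : ℕ) (s : Fin n → ℕ) : Hyp J p m s := by
  intro x
  have h1 : Continuous fun ε : ℝ => (∑ i, ∑ j, x i * x j *
      WW J (fun i => p i + ε) m (inc i (inc j s))) * WW J (fun i => p i + ε) (m + 2) s :=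
    (continuous_finsetSum _ fun i _ => continuous_finsetSum _ fun j _ =>
      continuous_const.mul (WW_cont J p _ _)).mul (WW_cont J p _ _)
  have h2 : Continuous fun ε : ℝ => (∑ i, x i * WW J (fun i => p i + ε) (m + 1) (inc i s)) ^ 2 :=
    (continuous_finsetSum _ fun i _ => continuous_const.mul (WW_cont J p _ _)).pow 2
  have h3 := le_of_tendsto_of_tendsto (b := nhdsWithin (0 : ℝ) (Set.Ioi 0))
    (h1.tendsto 0 |>.mono_left nhdsWithin_le_nhds) (h2.tendsto 0 |>.mono_left nhdsWithin_le_nhds)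
    (by
      filter_upwards [self_mem_nhdsWithin] with ε hε
      exact Hyp_pos J h_hered h_exch _ (fun i => add_pos_of_nonneg_of_pos (hp i) hε) m s x)
  simpa using h3

/-- The weights extended by zero. -/
def pw (ω : Fin n → ℝ) : Option (Fin n) → ℝ := fun o => o.elim 0 ω

theorem pw_nonneg (ω : Fin n → ℝ) (hω : ∀ i, 0 < ω i) (i : Option (Fin n)) : 0 ≤ pw ω i := by
  cases i with
  | none => exact le_rfl
  | some i => exact (hω i).le

theorem WW_pw_succ (J : Finset (Fin n → ℕ)) (ω : Fin n → ℝ) (m : ℕ) (s : Fin n → ℕ) :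
    WW J (pw ω) (m + 1) s = ∑ i, ω i * WW J (pw ω) m (s + Pi.single i 1) := by
  rw [WW_succ, Fintype.sum_option]
  simp [pw, inc]

theorem sum_inc (s : Fin n → ℕ) (i : Fin n) :
    ∑ j, (s + Pi.single i 1 : Fin n → ℕ) j = (∑ j, s j) + 1 := by
  simp [Finset.sum_add_distrib]

theorem exists_ext (J : Finset (Fin n → ℕ)) (h_ne : J.Nonempty)
    (h_exch : ∀ a ∈ J, ∀ b ∈ J, (∑ i, a i) < (∑ i, b i) →
      ∃ i : Fin n, a i < b i ∧ a + Pi.single i 1 ∈ J)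
    (s : Fin n → ℕ) (hs : s ∈ J) (h : ∑ i, s i < polyRk J) : ∃ i, s + Pi.single i 1 ∈ J := by
  obtain ⟨b, hb, hbe⟩ := Finset.exists_mem_eq_sup J h_ne (fun a => ∑ i, a i)
  unfold polyRk at h
  rw [hbe] at h
  obtain ⟨i, -, hi⟩ := h_exch s hs b hb h
  exact ⟨i, hi⟩

theorem WW_pw_pos (J : Finset (Fin n → ℕ)) (h_ne : J.Nonempty)
    (h_exch : ∀ a ∈ J, ∀ b ∈ J, (∑ i, a i) < (∑ i, b i) →
      ∃ i : Fin n, a i < b i ∧ a + Pi.single i 1 ∈ J)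
    (ω : Fin n → ℝ) (hω : ∀ i, 0 < ω i) (m : ℕ)
    (s : Fin n → ℕ) (hs : s ∈ J) (h : ∑ i, s i + m ≤ polyRk J) : 0 < WW J (pw ω) m s := by
  induction m generalizing s with
  | zero => simp [WW, hs]
  | succ m ih =>
    obtain ⟨i, hi⟩ := exists_ext J h_ne h_exch s hs (by omega)
    rw [WW_pw_succ]
    exact Finset.sum_pos' (fun l _ => mul_nonneg (hω l).le
      (WW_nonneg J _ (pw_nonneg ω hω) _ _))
      ⟨i, Finset.mem_univ _, mul_pos (hω i) (ih _ hi (by rw [sum_inc]; omega))⟩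

theorem xsum (J : Finset (Fin n → ℕ)) (p : Option (Fin n) → ℝ) (m : ℕ) (s : Fin n → ℕ)
    (l : Option (Fin n)) (t c : ℝ) :
    ∑ j, (t * ((if j = none then 1 else 0) - c * p j) + if j = l then 1 else 0) *
      WW J p m (inc j s) = t * (WW J p m s - c * WW J p (m + 1) s) + WW J p m (inc l s) := by
  have e1 : ∑ j, (if j = none then (1 : ℝ) else 0) * WW J p m (inc j s) = WW J p m s := by
    simp [inc]
  have e2 : ∑ j, (if j = l then (1 : ℝ) else 0) * WW J p m (inc j s) = WW J p m (inc l s) := by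
    simp
  rw [← e2, WW_succ]
  conv_rhs => rw [← e1]
  simp only [Finset.mul_sum, ← Finset.sum_add_distrib, ← Finset.sum_sub_distrib]
  exact Finset.sum_congr rfl fun j _ => by ring

theorem kernel_aux (J : Finset (Fin n → ℕ)) (p : Option (Fin n) → ℝ) (m : ℕ) (s : Fin n → ℕ)
    (hH : Hyp J p m s) (c : ℝ) (hpos : 0 < WW J p (m + 2) s)
    (hα : WW J p m s = c * WW J p (m + 1) s)
    (hβ : WW J p (m + 1) s = c * WW J p (m + 2) s) (l : Option (Fin n)) :
    WW J p m (inc l s) = c * WW J p (m + 1) (inc l s) := by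
  set κ := WW J p m (inc l s) - c * WW J p (m + 1) (inc l s) with hκ
  have key : ∀ t : ℝ, (2 * t * κ + WW J p m (inc l (inc l s))) * WW J p (m + 2) s ≤
      WW J p (m + 1) (inc l s) ^ 2 := by
    intro t
    set x : Option (Fin n) → ℝ :=
      fun j => t * ((if j = none then 1 else 0) - c * p j) + if j = l then 1 else 0 with hx
    have h := hH x
    have e0 : ∑ i, x i * WW J p (m + 1) (inc i s) = WW J p (m + 1) (inc l s) := by
      rw [xsum, ← hβ]; ring
    have e1 : ∑ i, x i * WW J p m (inc i s) = WW J p m (inc l s) := by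
      rw [xsum, ← hα]; ring
    have e2 : ∑ i, x i * WW J p m (inc i (inc l s)) = t * κ + WW J p m (inc l (inc l s)) :=
      xsum J p m (inc l s) l t c
    have e3 : ∑ i, ∑ j, x i * x j * WW J p m (inc i (inc j s)) =
        2 * t * κ + WW J p m (inc l (inc l s)) := by
      calc _ = ∑ i, x i * ∑ j, x j * WW J p m (inc j (inc i s)) := by
            simp only [Finset.mul_sum]
            refine Finset.sum_congr rfl fun i _ => Finset.sum_congr rfl fun j _ => ?_
            rw [inc_comm i j]; ring
        _ = ∑ i, x i * (t * (WW J p m (inc i s) - c * WW J p (m + 1) (inc i s))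
              + WW J p m (inc i (inc l s))) := by
            refine Finset.sum_congr rfl fun i _ => ?_
            rw [xsum, inc_comm l i]
        _ = t * ∑ i, x i * WW J p m (inc i s) - t * c * ∑ i, x i * WW J p (m + 1) (inc i s)
              + ∑ i, x i * WW J p m (inc i (inc l s)) := by
            simp only [Finset.mul_sum, ← Finset.sum_add_distrib, ← Finset.sum_sub_distrib]
            exact Finset.sum_congr rfl fun j _ => by ring
        _ = _ := by rw [e0, e1, e2, hκ]; ring
    rw [e0, e3] at h
    exact h
  have hκ0 : κ = 0 := by
    by_contra hne
    have h := key ((WW J p (m + 1) (inc l s) ^ 2 + 1 - WW J p m (inc l (inc l s)) *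
      WW J p (m + 2) s) / (2 * κ * WW J p (m + 2) s))
    have hp' := hpos.ne'
    have e : (2 * ((WW J p (m + 1) (inc l s) ^ 2 + 1 - WW J p m (inc l (inc l s)) *
      WW J p (m + 2) s) / (2 * κ * WW J p (m + 2) s)) * κ + WW J p m (inc l (inc l s))) *
      WW J p (m + 2) s = WW J p (m + 1) (inc l s) ^ 2 + 1 := by
      field_simp
      ring
    rw [e] at h
    linarith
  linarith

theorem logconc (J : Finset (Fin n → ℕ)) (p : Option (Fin n) → ℝ) (m : ℕ) (s : Fin n → ℕ)
    (hH : Hyp J p m s) : WW J p m s * WW J p (m + 2) s ≤ WW J p (m + 1) s ^ 2 := by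
  have := hH (fun j => if j = none then 1 else 0)
  simpa [inc] using this

theorem descend (J : Finset (Fin n → ℕ)) (h_ne : J.Nonempty)
    (h_hered : ∀ a ∈ J, ∀ b : Fin n → ℕ, b ≤ a → b ∈ J)
    (h_exch : ∀ a ∈ J, ∀ b ∈ J, (∑ i, a i) < (∑ i, b i) →
      ∃ i : Fin n, a i < b i ∧ a + Pi.single i 1 ∈ J)
    (ω : Fin n → ℝ) (hω : ∀ i, 0 < ω i) (m : ℕ)
    (s : Fin n → ℕ) (hs : s ∈ J) (h : ∑ i, s i + (m + 3) ≤ polyRk J) (c : ℝ)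
    (hα : WW J (pw ω) (m + 1) s = c * WW J (pw ω) (m + 2) s)
    (hβ : WW J (pw ω) (m + 2) s = c * WW J (pw ω) (m + 3) s) (l : Fin n)
    (hl : s + Pi.single l 1 ∈ J) :
    WW J (pw ω) m (s + Pi.single l 1) = c * WW J (pw ω) (m + 1) (s + Pi.single l 1) ∧
    WW J (pw ω) (m + 1) (s + Pi.single l 1) = c * WW J (pw ω) (m + 2) (s + Pi.single l 1) := by
  have hH := Hyp_nonneg J h_hered h_exch (pw ω) (pw_nonneg ω hω)
  have hker : ∀ i, WW J (pw ω) (m + 1) (s + Pi.single i 1) =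
      c * WW J (pw ω) (m + 2) (s + Pi.single i 1) := fun i =>
    kernel_aux J (pw ω) (m + 1) s (hH _ _) c (WW_pw_pos J h_ne h_exch ω hω _ s hs h) hα hβ (some i)
  refine ⟨?_, hker l⟩
  have hle : ∀ i, WW J (pw ω) m (s + Pi.single i 1) ≤
      c * WW J (pw ω) (m + 1) (s + Pi.single i 1) := by
    intro i
    by_cases hi : s + Pi.single i 1 ∈ J
    · have hp := WW_pw_pos J h_ne h_exch ω hω (m + 2) _ hi (by rw [sum_inc]; omega)
      have h1 := logconc J (pw ω) m _ (hH m (s + Pi.single i 1))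
      refine le_of_mul_le_mul_right (h1.trans (le_of_eq ?_)) hp
      nth_rewrite 1 [pow_two, hker i]
      ring
    · rw [WW_zero_of_notMem J h_hered _ _ _ hi, WW_zero_of_notMem J h_hered _ _ _ hi, mul_zero]
  have hsum : ∑ i, ω i * (c * WW J (pw ω) (m + 1) (s + Pi.single i 1) -
      WW J (pw ω) m (s + Pi.single i 1)) = 0 := by
    rw [WW_pw_succ, WW_pw_succ, Finset.mul_sum] at hα
    rw [← sub_eq_zero.2 hα.symm, ← Finset.sum_sub_distrib]
    exact Finset.sum_congr rfl fun i _ => by ring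
  have := (Finset.sum_eq_zero_iff_of_nonneg
    (fun i _ => mul_nonneg (hω i).le (sub_nonneg.2 (hle i)))).1 hsum l (Finset.mem_univ l)
  have := (mul_eq_zero.1 this).resolve_left (hω l).ne'
  linarith

theorem exists_pred (s : Fin n → ℕ) (m : ℕ) (h : ∑ i, s i = m + 1) :
    ∃ (b : Fin n → ℕ) (i : Fin n), s = b + Pi.single i 1 ∧ ∑ i, b i = m := by
  have : ∃ i, s i ≠ 0 := by
    by_contra hc
    push Not at hc
    simp [hc] at h
  obtain ⟨i, hi⟩ := this
  have e : s = (s - Pi.single i 1) + Pi.single i 1 := by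
    funext j
    by_cases hj : j = i
    · subst hj; simp; omega
    · simp [hj]
  refine ⟨s - Pi.single i 1, i, e, ?_⟩
  rw [e, sum_inc] at h
  omega

theorem chain (J : Finset (Fin n → ℕ)) (h_ne : J.Nonempty)
    (h_hered : ∀ a ∈ J, ∀ b : Fin n → ℕ, b ≤ a → b ∈ J)
    (h_exch : ∀ a ∈ J, ∀ b ∈ J, (∑ i, a i) < (∑ i, b i) →
      ∃ i : Fin n, a i < b i ∧ a + Pi.single i 1 ∈ J)
    (ω : Fin n → ℝ) (hω : ∀ i, 0 < ω i) (K : ℕ) (hK : K + 2 ≤ polyRk J) (c : ℝ)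
    (hα : WW J (pw ω) K 0 = c * WW J (pw ω) (K + 1) 0)
    (hβ : WW J (pw ω) (K + 1) 0 = c * WW J (pw ω) (K + 2) 0) (j : ℕ) :
    ∀ m, j + m = K → ∀ b ∈ J, ∑ i, b i = j →
      WW J (pw ω) m b = c * WW J (pw ω) (m + 1) b ∧
      WW J (pw ω) (m + 1) b = c * WW J (pw ω) (m + 2) b := by
  induction j with
  | zero =>
    intro m hm b _ hb0
    have : b = 0 := by
      funext i
      exact (Finset.sum_eq_zero_iff.1 hb0) i (Finset.mem_univ i)
    subst this
    have : m = K := by omega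
    subst this
    exact ⟨hα, hβ⟩
  | succ j ih =>
    intro m hm b hb hbs
    obtain ⟨b', i, rfl, hb'⟩ := exists_pred b j hbs
    have hb'J : b' ∈ J := h_hered _ hb _ (le_inc (some i) b')
    obtain ⟨h1, h2⟩ := ih (m + 1) (by omega) b' hb'J hb'
    exact descend J h_ne h_hered h_exch ω hω m b' hb'J (by omega) c h1 h2 i hb

theorem WW_one (J : Finset (Fin n → ℕ)) (ω : Fin n → ℝ) (s : Fin n → ℕ) :
    WW J (pw ω) 1 s = ∑ i ∈ pCont J s, ω i := by
  rw [WW_pw_succ, pCont, Finset.sum_filter]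
  simp [WW]

theorem pCont_mono (J : Finset (Fin n → ℕ))
    (h_hered : ∀ a ∈ J, ∀ b : Fin n → ℕ, b ≤ a → b ∈ J) (s : Fin n → ℕ) (i : Fin n) :
    pCont J (s + Pi.single i 1) ⊆ pCont J s := by
  intro j hj
  simp only [pCont, Finset.mem_filter, Finset.mem_univ, true_and] at hj ⊢
  exact h_hered _ hj _ (add_le_add_left (le_inc (some i) s) _)

theorem eq_of_wt (ω : Fin n → ℝ) (hω : ∀ i, 0 < ω i) (A B : Finset (Fin n)) (h : A ⊆ B)
    (hw : ∑ i ∈ A, ω i = ∑ i ∈ B, ω i) : A = B := by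
  by_contra hne
  obtain ⟨x, hxB, hxA⟩ := Finset.exists_of_ssubset (h.ssubset_of_ne hne)
  have := Finset.sum_lt_sum_of_subset h hxB hxA (hω x) (fun j _ _ => (hω j).le)
  linarith

theorem comb (J : Finset (Fin n → ℕ)) (h_ne : J.Nonempty)
    (h_hered : ∀ a ∈ J, ∀ b : Fin n → ℕ, b ≤ a → b ∈ J)
    (h_exch : ∀ a ∈ J, ∀ b ∈ J, (∑ i, a i) < (∑ i, b i) →
      ∃ i : Fin n, a i < b i ∧ a + Pi.single i 1 ∈ J)
    (ω : Fin n → ℝ) (hω : ∀ i, 0 < ω i) (K : ℕ) (hK : K + 2 ≤ polyRk J) (C : ℝ)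
    (h0 : ∀ s ∈ J, ∑ i, s i = K → ∑ i ∈ pCont J s, ω i = C)
    (h1 : ∀ s ∈ J, ∑ i, s i = K + 1 → ∑ i ∈ pCont J s, ω i = C) (d : ℕ) :
    ∀ s ∈ J, ∑ i, s i + d = K + 1 → ∑ i ∈ pCont J s, ω i = C := by
  induction d using Nat.strong_induction_on with
  | _ d ih =>
    intro s hs hsd
    match d, ih, hsd with
    | 0, _, hsd => exact h1 s hs hsd
    | 1, _, hsd => exact h0 s hs (by omega)
    | d + 2, ih, hsd =>
      obtain ⟨i, hi⟩ := exists_ext J h_ne h_exch s hs (by omega)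
      obtain ⟨l, hl⟩ := exists_ext J h_ne h_exch _ hi (by rw [sum_inc]; omega)
      have w1 := ih (d + 1) (by omega) _ hi (by rw [sum_inc]; omega)
      have w2 := ih d (by omega) _ hl (by rw [sum_inc, sum_inc]; omega)
      have e := eq_of_wt ω hω _ _ (pCont_mono J h_hered _ l) (w2.trans w1.symm)
      have hlm : l ∈ pCont J (s + Pi.single i 1 + Pi.single l 1) := by
        rw [e]; simp [pCont, hl]
      simp only [pCont, Finset.mem_filter, Finset.mem_univ, true_and] at hlm
      have hll : s + Pi.single l 1 + Pi.single l 1 ∈ J :=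
        h_hered _ hlm _ (add_le_add_left (add_le_add_left (le_inc (some i) s) _) _)
      have hsl : s + Pi.single l 1 ∈ J := h_hered _ hll _ (le_inc (some l) _)
      have w3 := ih (d + 1) (by omega) _ hsl (by rw [sum_inc]; omega)
      rw [← w3]
      refine congrArg (fun A => ∑ i ∈ A, ω i) (Finset.Subset.antisymm ?_ (pCont_mono J h_hered s l))
      intro j hj
      simp only [pCont, Finset.mem_filter, Finset.mem_univ, true_and] at hj ⊢
      obtain ⟨q, hq, hqJ⟩ := h_exch _ hj _ hll (by simp only [sum_inc]; omega)
      have : q = l := by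
        by_contra hne
        simp [Pi.single_apply, hne] at hq
      subst this
      rwa [add_right_comm]

theorem term_aux (ω : Fin n → ℝ) (b : Fin n → ℕ) (i : Fin n) :
    (((b + Pi.single i 1 : Fin n → ℕ) i : ℕ) : ℝ) *
      ((∏ j, ω j ^ (b + Pi.single i 1 : Fin n → ℕ) j) /
        (∏ j, (((b + Pi.single i 1 : Fin n → ℕ) j).factorial : ℝ))) =
      ω i * ((∏ j, ω j ^ b j) / (∏ j, ((b j).factorial : ℝ))) := by
  have h1 : ∏ j, ω j ^ (b + Pi.single i 1 : Fin n → ℕ) j = (∏ j, ω j ^ b j) * ω i := by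
    simp only [Pi.add_apply, pow_add, Finset.prod_mul_distrib]
    congr 1
    rw [Finset.prod_eq_single i]
    · simp
    · intro j _ hj; simp [hj]
    · simp
  have h2 : ∏ j, (((b + Pi.single i 1 : Fin n → ℕ) j).factorial : ℝ) =
      (∏ j, ((b j).factorial : ℝ)) * (b i + 1) := by
    rw [Fintype.prod_eq_mul_prod_compl i, Fintype.prod_eq_mul_prod_compl i
      (fun j => ((b j).factorial : ℝ))]
    have : ∏ j ∈ ({i} : Finset (Fin n))ᶜ, (((b + Pi.single i 1 : Fin n → ℕ) j).factorial : ℝ) =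
        ∏ j ∈ ({i} : Finset (Fin n))ᶜ, ((b j).factorial : ℝ) := by
      refine Finset.prod_congr rfl fun j hj => ?_
      have : j ≠ i := by simpa using hj
      simp [this]
    rw [this]
    simp only [Pi.add_apply, Pi.single_eq_same, Nat.factorial_succ]
    push_cast
    ring
  rw [h1, h2]
  have : (∏ j, ((b j).factorial : ℝ)) ≠ 0 := Finset.prod_ne_zero_iff.2 fun j _ => by positivity
  have : (b i : ℝ) + 1 ≠ 0 := by positivity
  simp only [Pi.add_apply, Pi.single_eq_same]
  push_cast
  field_simp

theorem WW_formula (J : Finset (Fin n → ℕ)) (ω : Fin n → ℝ) (m : ℕ) (s : Fin n → ℕ) :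
    WW J (pw ω) m s = m.factorial * ∑ a ∈ Finset.piAntidiag Finset.univ m,
      if s + a ∈ J then (∏ i, ω i ^ a i) / (∏ i, ((a i).factorial : ℝ)) else 0 := by
  induction m generalizing s with
  | zero =>
    simp [WW]
  | succ m ih =>
    rw [WW_pw_succ]
    simp only [ih]
    have e : ∀ i : Fin n, ∑ a ∈ Finset.piAntidiag Finset.univ m, ω i *
        (if s + Pi.single i 1 + a ∈ J then (∏ i, ω i ^ a i) / (∏ i, ((a i).factorial : ℝ)) else 0)
        = ∑ a ∈ Finset.piAntidiag Finset.univ (m + 1), (a i : ℝ) *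
          (if s + a ∈ J then (∏ i, ω i ^ a i) / (∏ i, ((a i).factorial : ℝ)) else 0) := by
      intro i
      have hterm : ∀ a : Fin n → ℕ, ω i * (if s + Pi.single i 1 + a ∈ J then
          (∏ i, ω i ^ a i) / (∏ i, ((a i).factorial : ℝ)) else 0) =
          (((a + Pi.single i 1 : Fin n → ℕ) i : ℕ) : ℝ) * (if s + (a + Pi.single i 1) ∈ J then
          (∏ j, ω j ^ (a + Pi.single i 1 : Fin n → ℕ) j) /
            (∏ j, (((a + Pi.single i 1 : Fin n → ℕ) j).factorial : ℝ)) else 0) := by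
        intro a
        have ee : s + Pi.single i 1 + a = s + (a + Pi.single i 1) := by abel
        rw [ee]
        split_ifs
        · exact (term_aux ω a i).symm
        · simp
      refine Finset.sum_bij_ne_zero (fun a _ _ => a + Pi.single i 1) ?_ ?_ ?_ ?_
      · intro a ha _
        simp only [Finset.mem_piAntidiag, Finset.mem_univ, implies_true, and_true] at ha ⊢
        rw [sum_inc, ha]
      · intro a _ _ b _ _ h
        exact add_right_cancel h
      · intro a ha hne
        simp only [Finset.mem_piAntidiag, Finset.mem_univ, implies_true, and_true] at ha
        have hai : a i ≠ 0 := by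
          intro h0; simp [h0] at hne
        have ea : a = (a - Pi.single i 1) + Pi.single i 1 := by
          funext j
          by_cases hj : j = i
          · subst hj; simp; omega
          · simp [hj]
        have hsum : ∑ j, (a - Pi.single i 1 : Fin n → ℕ) j = m := by
          rw [ea, sum_inc] at ha; omega
        refine ⟨a - Pi.single i 1, ?_, ?_, ea.symm⟩
        · simp only [Finset.mem_piAntidiag, Finset.mem_univ, implies_true, and_true]
          exact hsum
        · rw [hterm, ← ea]; exact hne
      · intro a _ _
        exact hterm a
    have e2 : ∀ i : Fin n, ω i * ((m.factorial : ℝ) * ∑ a ∈ Finset.piAntidiag Finset.univ m,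
        (if s + Pi.single i 1 + a ∈ J then (∏ i, ω i ^ a i) / (∏ i, ((a i).factorial : ℝ)) else 0))
        = (m.factorial : ℝ) * ∑ a ∈ Finset.piAntidiag Finset.univ (m + 1), (a i : ℝ) *
          (if s + a ∈ J then (∏ i, ω i ^ a i) / (∏ i, ((a i).factorial : ℝ)) else 0) := by
      intro i
      rw [← e i, ← Finset.mul_sum]; ring
    simp only [e2]
    rw [← Finset.mul_sum, Finset.sum_comm, Nat.factorial_succ, mul_comm (m + 1), Nat.cast_mul,
      mul_assoc]
    congr 1
    rw [Finset.mul_sum]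
    refine Finset.sum_congr rfl fun a ha => ?_
    simp only [Finset.mem_piAntidiag, Finset.mem_univ, implies_true, and_true] at ha
    rw [← Finset.sum_mul, ← Nat.cast_sum, ha]

theorem Jw_eq (J : Finset (Fin n → ℕ)) (ω : Fin n → ℝ) (m : ℕ) :
    Jw J ω m = WW J (pw ω) m 0 / m.factorial := by
  rw [WW_formula, mul_div_cancel_left₀ _ (by positivity), Jw, ← Finset.sum_filter]
  refine Finset.sum_congr ?_ fun _ _ => rfl
  ext a
  simp [polySize, Finset.mem_piAntidiag, and_comm]

theorem WW_full (J : Finset (Fin n → ℕ)) (ω : Fin n → ℝ) (k : ℕ)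
    (h : ∀ a : Fin n → ℕ, (∑ i, a i) ≤ k → a ∈ J) (m : ℕ) (s : Fin n → ℕ)
    (hs : ∑ i, s i + m ≤ k) : WW J (pw ω) m s = (∑ i, ω i) ^ m := by
  induction m generalizing s with
  | zero => simp [WW, h s hs]
  | succ m ih =>
    rw [WW_pw_succ, pow_succ', Finset.sum_mul]
    exact Finset.sum_congr rfl fun i _ => by rw [ih _ (by rw [sum_inc]; omega)]

/-- **Equality for discrete polymatroids (the `t = 1` case).**  For a nondegenerate discrete
polymatroid, equality `J_ω(k)² = (1 + 1/k)·J_ω(k-1)·J_ω(k+1)` holds if and only if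
`polygirth(D) > k+1`, i.e. every `a ∈ ℕ^n` with `|a| ≤ k+1` lies in `J`. -/
theorem polymatroid_equality_t_one
    (J : Finset (Fin n → ℕ)) (h_ne : J.Nonempty)
    (h_hered : ∀ a ∈ J, ∀ b : Fin n → ℕ, b ≤ a → b ∈ J)
    (h_exch : ∀ a ∈ J, ∀ b ∈ J, (∑ i, a i) < (∑ i, b i) →
      ∃ i : Fin n, a i < b i ∧ a + Pi.single i 1 ∈ J)
    (h_nondeg : ∀ i : Fin n, Pi.single i 1 ∈ J)
    (ω : Fin n → ℝ) (hω : ∀ i, 0 < ω i)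
    (k : ℕ) (hk1 : 1 ≤ k) (hk2 : k < polyRk J) :
    (Jw J ω k) ^ 2 =
        ((1 : ℝ) + 1 / (k : ℝ)) * Jw J ω (k - 1) * Jw J ω (k + 1) ↔
      ∀ a : Fin n → ℕ, (∑ i, a i) ≤ k + 1 → a ∈ J := by

  obtain ⟨K, rfl⟩ : ∃ K, k = K + 1 := ⟨k - 1, by omega⟩
  have h0J : (0 : Fin n → ℕ) ∈ J := by
    obtain ⟨b, hb⟩ := h_ne
    exact h_hered b hb 0 (fun i => Nat.zero_le _)
  have heq : (Jw J ω (K + 1)) ^ 2 =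
        ((1 : ℝ) + 1 / ((K + 1 : ℕ) : ℝ)) * Jw J ω (K + 1 - 1) * Jw J ω (K + 1 + 1) ↔
      WW J (pw ω) (K + 1) 0 ^ 2 = WW J (pw ω) K 0 * WW J (pw ω) (K + 2) 0 := by
    rw [Jw_eq, Jw_eq, Jw_eq, Nat.add_sub_cancel]
    have hf : (K.factorial : ℝ) ≠ 0 := by positivity
    have hK1 : (K : ℝ) + 1 ≠ 0 := by positivity
    have hK2 : (K : ℝ) + 1 + 1 ≠ 0 := by positivity
    have e1 : (((K + 1).factorial : ℕ) : ℝ) = (K + 1) * K.factorial := by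
      rw [Nat.factorial_succ]; push_cast; ring
    have e2 : (((K + 1 + 1).factorial : ℕ) : ℝ) = (K + 1 + 1) * ((K + 1) * K.factorial) := by
      rw [Nat.factorial_succ, Nat.cast_mul, e1]; push_cast; ring
    rw [e1, e2]
    push_cast
    have e3 : (1 + 1 / ((K : ℝ) + 1)) * (WW J (pw ω) K 0 / K.factorial) *
        (WW J (pw ω) (K + 1 + 1) 0 / ((K + 1 + 1) * ((K + 1) * K.factorial))) =
        (WW J (pw ω) K 0 * WW J (pw ω) (K + 2) 0) / ((K + 1) * K.factorial) ^ 2 := by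
      field_simp
    rw [e3, div_pow, div_left_inj' (by positivity)]
  rw [heq]
  constructor
  · intro h
    have hpos : ∀ m ≤ K + 2, 0 < WW J (pw ω) m 0 := fun m hm =>
      WW_pw_pos J h_ne h_exch ω hω m 0 h0J (by simp; omega)
    have p0 := hpos K (by omega)
    have p1 := hpos (K + 1) (by omega)
    have p2 := hpos (K + 2) (by omega)
    set c := WW J (pw ω) (K + 1) 0 / WW J (pw ω) (K + 2) 0 with hc
    have hcpos : 0 < c := div_pos p1 p2
    have hβ : WW J (pw ω) (K + 1) 0 = c * WW J (pw ω) (K + 2) 0 := by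
      rw [hc]; field_simp
    have hα : WW J (pw ω) K 0 = c * WW J (pw ω) (K + 1) 0 := by
      rw [hc, div_mul_eq_mul_div, eq_div_iff p2.ne', ← h, pow_two]
    have hch := chain J h_ne h_hered h_exch ω hω K hk2 c hα hβ K 0 rfl
    have hone : ∀ s ∈ J, WW J (pw ω) 0 s = c * WW J (pw ω) 1 s →
        ∑ i ∈ pCont J s, ω i = 1 / c := by
      intro s hs he
      rw [WW_one] at he
      simp only [WW, hs, if_true] at he
      rw [eq_div_iff hcpos.ne', he]; ring
    have w0 : ∀ s ∈ J, ∑ i, s i = K → ∑ i ∈ pCont J s, ω i = 1 / c := fun s hs hsK =>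
      hone s hs (hch s hs hsK).1
    have w1 : ∀ s ∈ J, ∑ i, s i = K + 1 → ∑ i ∈ pCont J s, ω i = 1 / c := by
      intro s hs hsK
      obtain ⟨b, i, rfl, hb⟩ := exists_pred s K hsK
      have hbJ : b ∈ J := h_hered _ hs _ (le_inc (some i) b)
      refine hone _ hs ?_
      exact kernel_aux J (pw ω) 0 b
        (Hyp_nonneg J h_hered h_exch (pw ω) (pw_nonneg ω hω) 0 b) c
        (WW_pw_pos J h_ne h_exch ω hω 2 b hbJ (by omega)) (hch b hbJ hb).1 (hch b hbJ hb).2 (some i)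
    have wall : ∀ s ∈ J, ∑ i, s i ≤ K + 1 → ∑ i ∈ pCont J s, ω i = 1 / c := by
      intro s hs hle
      exact comb J h_ne h_hered h_exch ω hω K hk2 (1 / c) w0 w1 (K + 1 - ∑ i, s i) s hs (by omega)
    have hfull : ∀ s ∈ J, ∑ i, s i ≤ K + 1 → pCont J s = Finset.univ := by
      intro s hs hle
      have e0 : pCont J (0 : Fin n → ℕ) = Finset.univ := by
        ext i; simp [pCont, h_nondeg i]
      have hz := wall 0 h0J (by simp)
      rw [e0] at hz
      exact eq_of_wt ω hω _ _ (Finset.subset_univ _) ((wall s hs hle).trans hz.symm)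
    have hall : ∀ m, m ≤ K + 1 + 1 → ∀ a : Fin n → ℕ, ∑ i, a i = m → a ∈ J := by
      intro m
      induction m with
      | zero =>
        intro _ a ha
        have : a = 0 := by
          funext i
          exact (Finset.sum_eq_zero_iff.1 ha) i (Finset.mem_univ i)
        rw [this]; exact h0J
      | succ m ih =>
        intro hm a ha
        obtain ⟨b, i, rfl, hb⟩ := exists_pred a m ha
        have hbJ := ih (by omega) b hb
        have : i ∈ pCont J b := by rw [hfull b hbJ (by omega)]; exact Finset.mem_univ i
        simpa [pCont] using this
    intro a ha
    exact hall _ ha a rfl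
  · intro h
    rw [WW_full J ω _ h _ 0 (by simp), WW_full J ω _ h _ 0 (by simp; omega),
      WW_full J ω _ h _ 0 (by simp)]
    ring
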